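/- arXiv:2009.05892 — 3 statements merged into one kernel-verified Lean document; each statement's English description precedes it below -/
import Mathlib

section
/- Under the global causal null, the wealth process (M_t)_{t=0}^{n−|I_0|} of the i-bet test is a nonnegative martingale with respect to the filtration (ℱ_t): M_t ≥ 0 almost surely, M_t is ℱ_t-measurable, M_0 = 1, and E(M_t | ℱ_{t−1}) = M_{t−1} almost surely for every 1 ≤ t ≤ n−|I_0|. -/
open MeasureTheory ProbabilityTheory
open scoped ENNReal


/-- Sets whose trace on `C` is `H`-measurable. -/
def traceSpace {Ω : Type*} (H : MeasurableSpace Ω) (C : Set Ω) (hC : MeasurableSet[H] C) :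
    MeasurableSpace Ω where
  MeasurableSet' B := MeasurableSet[H] (B ∩ C)
  measurableSet_empty := by simp
  measurableSet_compl := by
    intro B hB
    have : Bᶜ ∩ C = C \ (B ∩ C) := by
      ext x; simp; tauto
    rw [this]
    exact MeasurableSet.diff hC hB
  measurableSet_iUnion := by
    intro f hf
    rw [Set.iUnion_inter]
    exact MeasurableSet.iUnion hf

theorem preimage_sel {Ω : Type*} {n : ℕ} (A : Fin n → Ω → ℝ) (p : Ω → Fin n) (S : Set ℝ) :
    (fun ω => A (p ω) ω) ⁻¹' S = ⋃ j, (A j ⁻¹' S ∩ p ⁻¹' {j}) := by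
  ext x; simp

theorem factor_bound {μ w a : ℝ} (hμ : μ ∈ Set.Ioo (0:ℝ) 1) (ha : a = 0 ∨ a = 1)
    (hw : w ∈ Set.Icc (-(μ / (1 - μ))) 1) :
    0 ≤ 1 + w * (a / μ - 1) ∧ 1 + w * (a / μ - 1) ≤ 1 / μ + 1 / (1 - μ) ∧
      |w| ≤ 1 / μ + 1 / (1 - μ) := by
  obtain ⟨h0, h1⟩ := hμ
  obtain ⟨hw0, hw1⟩ := hw
  have h2 : 0 < 1 - μ := by linarith
  have e : μ / (1 - μ) = 1 / (1 - μ) - 1 := by field_simp; ring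
  have k0 : 1 < 1 / μ := by rw [lt_div_iff₀ h0]; linarith
  have k1 : 1 < 1 / (1 - μ) := by rw [lt_div_iff₀ h2]; linarith
  rw [e] at hw0
  refine ⟨?_, ?_, ?_⟩
  · rcases ha with rfl | rfl
    · simp; linarith
    · have : (1 / (1 - μ) - 1) * (1 / μ - 1) = 1 := by field_simp; ring
      nlinarith
  · rcases ha with rfl | rfl
    · simp only [zero_div]; linarith
    · nlinarith
  · rw [abs_le]; constructor <;> linarith

/-- **The i-bet wealth process is a nonnegative martingale.**
Under the global causal null, the wealth process `(M t)` of the i-bet test is a nonnegative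
martingale with respect to the filtration `(ℱ t)`: `M t ≥ 0` almost surely, `M t` is
`ℱ t`-measurable, `M 0 = 1`, and `E(M t | ℱ (t−1)) = M (t−1)` a.s. for `1 ≤ t ≤ n − |I₀|`. -/
theorem ibet_wealth_is_nonneg_martingale
    {Ω : Type*} {m0 : MeasurableSpace Ω} (P : Measure Ω) [IsProbabilityMeasure P]
    (n : ℕ) (μ : Fin n → ℝ) (hμ : ∀ i, μ i ∈ Set.Ioo (0:ℝ) 1)
    -- the treatment assignments
    (A : Fin n → Ω → ℝ) (hAmeas : ∀ i, Measurable (A i))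
    (hA01 : ∀ i ω, A i ω = 0 ∨ A i ω = 1)
    (hA1 : ∀ i, P {ω | A i ω = 1} = ENNReal.ofReal (μ i))
    -- the σ-algebra generated by all outcomes and covariates
    (𝒢 : MeasurableSpace Ω) (h𝒢 : 𝒢 ≤ m0)
    -- global causal null: the `A i` are mutually independent and the vector `(A 1, …, A n)`
    -- is independent of `𝒢`
    (hindep : iIndep (fun j : Option (Fin n) =>
        j.elim 𝒢 (fun i => MeasurableSpace.comap (A i) inferInstance)) P)
    -- the initially revealed holdout set
    (I₀ : Finset (Fin n))
    -- the interactively chosen ordering `π`, the revealed sets `I t`, and the filtration `ℱ`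
    (π : ℕ → Ω → Fin n) (I : ℕ → Ω → Finset (Fin n)) (ℱ : ℕ → MeasurableSpace Ω)
    (hI0 : ∀ ω, I 0 ω = I₀)
    (hIsucc : ∀ t, t + 1 ≤ n - I₀.card → ∀ ω, I (t+1) ω = insert (π (t+1) ω) (I t ω))
    (hℱ0 : ℱ 0 = 𝒢 ⊔ ⨆ i ∈ I₀, MeasurableSpace.comap (A i) inferInstance)
    (hℱsucc : ∀ t, t + 1 ≤ n - I₀.card → ℱ (t+1) = ℱ t ⊔
        MeasurableSpace.comap (fun ω => A (π (t+1) ω) ω) inferInstance)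
    -- `π (t+1)` is `ℱ t`-measurable with values outside the already revealed set
    (hπmeas : ∀ t, t + 1 ≤ n - I₀.card → Measurable[ℱ t] (π (t+1)))
    (hπnew : ∀ t, t + 1 ≤ n - I₀.card → ∀ ω, π (t+1) ω ∉ I t ω)
    -- the predictable bets
    (w : ℕ → Ω → ℝ)
    (hwmeas : ∀ t, t + 1 ≤ n - I₀.card → Measurable[ℱ t] (w (t+1)))
    (hw : ∀ t, t + 1 ≤ n - I₀.card → ∀ᵐ ω ∂P, w (t+1) ω ∈
        Set.Icc (-(μ (π (t+1) ω) / (1 - μ (π (t+1) ω)))) 1)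
    -- the wealth process
    (M : ℕ → Ω → ℝ)
    (hM : ∀ t, t ≤ n - I₀.card → ∀ ω, M t ω = ∏ j ∈ Finset.range t,
        (1 + w (j+1) ω * (A (π (j+1) ω) ω / μ (π (j+1) ω) - 1)))
    :
    (∀ t, t ≤ n - I₀.card → (∀ᵐ ω ∂P, 0 ≤ M t ω) ∧ StronglyMeasurable[ℱ t] (M t)) ∧
    (∀ ω, M 0 ω = 1) ∧
    (∀ t, 1 ≤ t → t ≤ n - I₀.card → P[M t | ℱ (t-1)] =ᵐ[P] M (t-1)) := by
  classical
  set N := n - I₀.card with hN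
  set m : Option (Fin n) → MeasurableSpace Ω := fun j =>
        j.elim 𝒢 (fun i => MeasurableSpace.comap (A i) inferInstance) with hm
  have hm_le : ∀ j, m j ≤ m0 := by
    rintro (_ | i)
    · exact h𝒢
    · exact (hAmeas i).comap_le
  -- the σ-algebra of everything but `A i`
  set H : Fin n → MeasurableSpace Ω := fun i => ⨆ j ∈ ({some i}ᶜ : Set (Option (Fin n))), m j
    with hH
  have hHle : ∀ i, H i ≤ m0 := fun i => iSup₂_le fun j _ => hm_le j
  have hmH : ∀ i j, j ≠ some i → m j ≤ H i := fun i j hj =>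
    le_iSup₂_of_le (f := fun j (_ : j ∈ ({some i}ᶜ : Set (Option (Fin n)))) => m j) j
      (by simpa using hj) le_rfl
  have hind : ∀ i, Indep (m (some i)) (H i) P := by
    intro i
    have := indep_iSup_of_disjoint hm_le hindep
      (S := {some i}) (T := {some i}ᶜ) disjoint_compl_right
    rw [iSup_singleton] at this
    exact this
  have hmono : ∀ t, t + 1 ≤ N → ℱ t ≤ ℱ (t+1) := by
    intro t ht; rw [hℱsucc t ht]; exact le_sup_left
  have hsel : ∀ t, t + 1 ≤ N → Measurable[ℱ (t+1)] (fun ω => A (π (t+1) ω) ω) := by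
    intro t ht
    rw [measurable_iff_comap_le, hℱsucc t ht]; exact le_sup_right
  have hℱle : ∀ t, t ≤ N → ℱ t ≤ m0 := by
    intro t
    induction t with
    | zero =>
      intro _
      rw [hℱ0]
      exact sup_le h𝒢 (iSup₂_le fun i _ => (hAmeas i).comap_le)
    | succ t ih =>
      intro ht
      have ih := ih (by omega)
      rw [hℱsucc t ht]
      refine sup_le ih ?_
      rintro _ ⟨S, hS, rfl⟩
      rw [preimage_sel]
      refine MeasurableSet.iUnion fun j => MeasurableSet.inter (hAmeas j hS) ?_
      exact ih _ (hπmeas t ht (measurableSet_singleton j))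
  -- key claim
  have key : ∀ i t, t ≤ N → ∀ B, MeasurableSet[ℱ t] B → MeasurableSet[H i] (B ∩ {ω | i ∉ I t ω}) := by
    intro i t
    induction t with
    | zero =>
      intro _ B hB
      simp only [hI0]
      by_cases hi : i ∈ I₀
      · simp [hi]
      · simp only [hi, not_false_eq_true, Set.setOf_true, Set.inter_univ]
        have : ℱ 0 ≤ H i := by
          rw [hℱ0]
          refine sup_le (hmH i none (by simp)) (iSup₂_le fun j hj => hmH i (some j) ?_)
          rintro h
          exact hi (by simpa using (Option.some.inj h) ▸ hj)
        exact this _ hB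
    | succ t ih =>
      intro ht
      have ih := ih (by omega)
      have hset : {ω | i ∉ I (t+1) ω} = (π (t+1) ⁻¹' {i}ᶜ) ∩ {ω | i ∉ I t ω} := by
        ext ω
        simp [hIsucc t ht, eq_comm]
      have hpm : ∀ s : Set (Fin n), MeasurableSet[ℱ t] (π (t+1) ⁻¹' s) := fun s =>
        hπmeas t ht (MeasurableSet.of_discrete)
      have hC : MeasurableSet[H i] {ω | i ∉ I (t+1) ω} := by
        rw [hset]; exact ih _ (hpm _)
      have hle : ℱ (t+1) ≤ traceSpace (H i) _ hC := by
        rw [hℱsucc t ht]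
        refine sup_le ?_ ?_
        · intro B hB
          change MeasurableSet[H i] (B ∩ _)
          rw [hset, ← Set.inter_assoc]
          exact ih _ (MeasurableSet.inter hB (hpm _))
        · rintro _ ⟨S, hS, rfl⟩
          change MeasurableSet[H i] (_ ∩ _)
          have : (fun ω => A (π (t+1) ω) ω) ⁻¹' S ∩ {ω | i ∉ I (t+1) ω} =
              ⋃ j ∈ ({i}ᶜ : Set (Fin n)), (A j ⁻¹' S ∩ (π (t+1) ⁻¹' {j} ∩ {ω | i ∉ I t ω})) := by
            rw [hset]
            ext ω
            simp
          rw [this]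
          refine MeasurableSet.biUnion (Set.to_countable _) fun j hj => MeasurableSet.inter ?_ (ih _ (hpm _))
          refine hmH i (some j) (by simpa using hj) _ ?_
          exact ⟨S, hS, rfl⟩
      exact hle
  -- measurability
  have hM0 : ∀ ω, M 0 ω = 1 := fun ω => by simp [hM 0 (Nat.zero_le _) ω]
  have hMsucc : ∀ t, t + 1 ≤ N → ∀ ω, M (t+1) ω = M t ω *
      (1 + w (t+1) ω * (A (π (t+1) ω) ω / μ (π (t+1) ω) - 1)) := by
    intro t ht ω
    rw [hM _ ht, hM t (by omega), Finset.prod_range_succ]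
  have hμπ : ∀ t, t + 1 ≤ N → Measurable[ℱ t] (fun ω => μ (π (t+1) ω)) := fun t ht =>
    (measurable_from_top (f := μ)).comp (hπmeas t ht)
  have hMmeas : ∀ t, t ≤ N → Measurable[ℱ t] (M t) := by
    intro t
    induction t with
    | zero =>
      intro _
      have : M 0 = fun _ => 1 := funext hM0
      rw [this]; exact measurable_const
    | succ t ih =>
      intro ht
      have h1 := (ih (by omega)).mono (hmono t ht) le_rfl
      have h2 := (hwmeas t ht).mono (hmono t ht) le_rfl
      have h3 := (hμπ t ht).mono (hmono t ht) le_rfl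
      have h4 := hsel t ht
      rw [funext (hMsucc t ht)]
      exact h1.mul (measurable_const.add (h2.mul ((h4.div h3).sub measurable_const)))
  -- bounds
  obtain ⟨K, hK⟩ : ∃ K : ℝ, ∀ i, 1 / μ i + 1 / (1 - μ i) ≤ K := by
    refine ⟨∑ i, (1 / μ i + 1 / (1 - μ i)), fun i => ?_⟩
    refine Finset.single_le_sum (f := fun i => 1 / μ i + 1 / (1 - μ i)) (fun j _ => ?_) (Finset.mem_univ i)
    have h1 := (hμ j).1
    have h2 : 0 < 1 - μ j := by linarith [(hμ j).2]
    positivity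
  have hMb : ∀ t, t ≤ N → ∃ L : ℝ, 0 ≤ L ∧ ∀ᵐ ω ∂P, 0 ≤ M t ω ∧ M t ω ≤ L := by
    intro t
    induction t with
    | zero => exact fun _ => ⟨1, zero_le_one, by simp [hM0]⟩
    | succ t ih =>
      intro ht
      obtain ⟨L, hL0, hL⟩ := ih (by omega)
      refine ⟨L * |K|, by positivity, ?_⟩
      filter_upwards [hL, hw t ht] with ω h1 h2
      obtain ⟨a, b, c⟩ := factor_bound (hμ _) (hA01 (π (t+1) ω) ω) h2
      rw [hMsucc t ht]
      exact ⟨mul_nonneg h1.1 a, mul_le_mul h1.2 ((b.trans (hK _)).trans (le_abs_self K)) a hL0⟩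
  have hMint : ∀ t, t ≤ N → Integrable (M t) P := by
    intro t ht
    obtain ⟨L, _, hL⟩ := hMb t ht
    refine Integrable.of_bound ((hMmeas t ht).mono (hℱle t ht) le_rfl).aestronglyMeasurable L ?_
    filter_upwards [hL] with ω h
    rw [Real.norm_eq_abs, abs_of_nonneg h.1]; exact h.2
  refine ⟨fun t ht => ⟨?_, (hMmeas t ht).stronglyMeasurable⟩, hM0, ?_⟩
  · obtain ⟨L, _, hL⟩ := hMb t ht
    filter_upwards [hL] with ω h using h.1
  intro s hs hsN
  obtain ⟨t, rfl⟩ : ∃ t, s = t + 1 := ⟨s - 1, by omega⟩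
  rw [Nat.add_sub_cancel]
  have ht : t ≤ N := by omega
  have hle := hℱle t ht
  -- centered increments
  set X : Fin n → Ω → ℝ := fun i ω => A i ω / μ i - 1 with hX
  have hAint : ∀ i, Integrable (A i) P := fun i =>
    Integrable.of_bound (hAmeas i).aestronglyMeasurable 1
      (Filter.Eventually.of_forall fun ω => by rcases hA01 i ω with h | h <;> simp [h])
  have hXint : ∀ i, Integrable (X i) P := fun i => ((hAint i).div_const _).sub (integrable_const _)
  have hXmean : ∀ i, ∫ ω, X i ω ∂P = 0 := by
    intro i
    have hAm : ∫ ω, A i ω ∂P = μ i := by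
      have e : A i = Set.indicator {ω | A i ω = 1} (fun _ => (1:ℝ)) := by
        ext ω
        rcases hA01 i ω with h | h <;> simp [Set.indicator, h]
      have ms : MeasurableSet[m0] {ω | A i ω = 1} := hAmeas i (measurableSet_singleton 1)
      rw [e, integral_indicator_const _ ms]
      simp [Measure.real, hA1, (hμ i).1.le]
    simp only [hX]
    rw [integral_sub ((hAint i).div_const _) (integrable_const _), integral_div, hAm,
      div_self (hμ i).1.ne']
    simp
  have hXset : ∀ i B, MeasurableSet[H i] B → ∫ ω in B, X i ω ∂P = 0 := by
    intro i B hB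
    rw [← setIntegral_condExp (hHle i) (hXint i) hB]
    have hXm : StronglyMeasurable[m (some i)] (X i) := by
      have : Measurable[m (some i)] (A i) := comap_measurable (A i)
      exact ((this.div_const _).sub_const _).stronglyMeasurable
    have h := condExp_indep_eq (hm_le (some i)) (hHle i) hXm (hind i)
    rw [setIntegral_congr_ae (g := fun _ => 0) (hHle i _ hB)
      (by filter_upwards [h] with ω hω _; rw [hω, hXmean])]
    simp
  have hpm : ∀ i, MeasurableSet[ℱ t] (π (t+1) ⁻¹' {i}) := fun i =>
        hπmeas t hsN (measurableSet_singleton i)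
  set D : Ω → ℝ := fun ω => X (π (t+1) ω) ω with hD
  have hDsum : D = fun ω => ∑ i, (π (t+1) ⁻¹' {i}).indicator (X i) ω := by
    ext ω
    simp [hD, Set.indicator]
  have hIint : ∀ i, Integrable ((π (t+1) ⁻¹' {i}).indicator (X i)) P := fun i =>
    (hXint i).indicator (hle _ (hpm i))
  have hDint : Integrable D P := by
    rw [hDsum]; exact integrable_finset_sum _ fun i _ => hIint i
  have hDset : ∀ B, MeasurableSet[ℱ t] B → ∫ ω in B, D ω ∂P = 0 := by
    intro B hB
    rw [hDsum, integral_finset_sum _ fun i _ => (hIint i).integrableOn]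
    refine Finset.sum_eq_zero fun i _ => ?_
    rw [setIntegral_indicator (hle _ (hpm i))]
    apply hXset
    have e : B ∩ π (t+1) ⁻¹' {i} = (B ∩ π (t+1) ⁻¹' {i}) ∩ {ω | i ∉ I t ω} := by
      ext ω
      simp only [Set.mem_inter_iff, Set.mem_preimage, Set.mem_singleton_iff, Set.mem_setOf_eq,
        iff_self_and, and_imp]
      rintro _ rfl
      exact hπnew t hsN ω
    rw [e]
    exact key i t ht _ (MeasurableSet.inter hB (hpm i))
  have hDcond : P[D | ℱ t] =ᵐ[P] 0 := by
    refine (ae_eq_condExp_of_forall_setIntegral_eq hle hDint (g := 0) (fun _ _ _ => integrableOn_zero)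
      (fun B hB _ => by rw [hDset B hB]; simp) ?_).symm
    exact stronglyMeasurable_zero.aestronglyMeasurable
  have hMeq : M (t+1) = M t + (M t * w (t+1)) * D := by
    ext ω
    simp only [hMsucc t hsN ω, Pi.add_apply, Pi.mul_apply, hD, hX]
    ring
  have hMw : StronglyMeasurable[ℱ t] (M t * w (t+1)) :=
    ((hMmeas t ht).mul (hwmeas t hsN)).stronglyMeasurable
  have hprod : Integrable ((M t * w (t+1)) * D) P := by
    have : (M t * w (t+1)) * D = M (t+1) - M t := by rw [hMeq]; ring
    rw [this]; exact (hMint _ hsN).sub (hMint _ ht)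
  rw [hMeq]
  have h1 := condExp_add (hMint t ht) hprod (ℱ t)
  have h2 := condExp_mul_of_stronglyMeasurable_left hMw hprod hDint
  have h3 := condExp_of_stronglyMeasurable hle (hMmeas t ht).stronglyMeasurable (hMint t ht)
  filter_upwards [h1, h2, hDcond] with ω a b c
  rw [a, Pi.add_apply, b, h3, Pi.mul_apply, c]
  simp
end

section
/- Under the global causal null, the conditional expectation of the treatment assignment of the interactively selected subject equals its treatment probability: for every t ≥ 1, E(A_{π_t} | ℱ_{t−1}) = μ_{π_t} almost surely. Equivalently, writing the left side as a sum over possible values j of π_t, E(A_j | ℱ_{t−1}) = μ_j on the event {π_t = j} for every j ∈ {1,…,n}. -/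
open MeasureTheory ProbabilityTheory
open scoped ENNReal

/-- Trace σ-algebra. -/
@[reducible] def ibetTrace {Ω : Type*} (H : MeasurableSpace Ω) (E : Set Ω) (hE : MeasurableSet[H] E) :
    MeasurableSpace Ω where
  MeasurableSet' s := MeasurableSet[H] (s ∩ E)
  measurableSet_empty := by simp
  measurableSet_compl s hs := by
    have : sᶜ ∩ E = E \ (s ∩ E) := by ext x; simp; tauto
    rw [this]; exact hE.diff hs
  measurableSet_iUnion f hf := by
    rw [Set.iUnion_inter]; exact MeasurableSet.iUnion hf

/-- **Conditional mean of the interactively selected assignment.**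
Under the global causal null, the conditional expectation of the treatment assignment of the
interactively selected subject equals its treatment probability:
`E(A (π t) | ℱ (t−1)) = μ (π t)` almost surely; equivalently, `E(A j | ℱ (t−1)) = μ j` on the
event `{π t = j}` for every `j`. -/
theorem ibet_condexp_selected_assignment
    {Ω : Type*} {m0 : MeasurableSpace Ω} (P : Measure Ω) [IsProbabilityMeasure P]
    (n : ℕ) (μ : Fin n → ℝ) (hμ : ∀ i, μ i ∈ Set.Ioo (0:ℝ) 1)
    -- the treatment assignments
    (A : Fin n → Ω → ℝ) (hAmeas : ∀ i, Measurable (A i))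
    (hA01 : ∀ i ω, A i ω = 0 ∨ A i ω = 1)
    (hA1 : ∀ i, P {ω | A i ω = 1} = ENNReal.ofReal (μ i))
    -- the σ-algebra generated by all outcomes and covariates
    (𝒢 : MeasurableSpace Ω) (h𝒢 : 𝒢 ≤ m0)
    -- global causal null: the `A i` are mutually independent and the vector `(A 1, …, A n)`
    -- is independent of `𝒢`
    (hindep : iIndep (fun j : Option (Fin n) =>
        j.elim 𝒢 (fun i => MeasurableSpace.comap (A i) inferInstance)) P)
    -- the initially revealed holdout set
    (I₀ : Finset (Fin n))
    -- the interactively chosen ordering `π`, the revealed sets `I t`, and the filtration `ℱ`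
    (π : ℕ → Ω → Fin n) (I : ℕ → Ω → Finset (Fin n)) (ℱ : ℕ → MeasurableSpace Ω)
    (hI0 : ∀ ω, I 0 ω = I₀)
    (hIsucc : ∀ t, t + 1 ≤ n - I₀.card → ∀ ω, I (t+1) ω = insert (π (t+1) ω) (I t ω))
    (hℱ0 : ℱ 0 = 𝒢 ⊔ ⨆ i ∈ I₀, MeasurableSpace.comap (A i) inferInstance)
    (hℱsucc : ∀ t, t + 1 ≤ n - I₀.card → ℱ (t+1) = ℱ t ⊔
        MeasurableSpace.comap (fun ω => A (π (t+1) ω) ω) inferInstance)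
    -- `π (t+1)` is `ℱ t`-measurable with values outside the already revealed set
    (hπmeas : ∀ t, t + 1 ≤ n - I₀.card → Measurable[ℱ t] (π (t+1)))
    (hπnew : ∀ t, t + 1 ≤ n - I₀.card → ∀ ω, π (t+1) ω ∉ I t ω)
    :
    -- the conditional expectation of the selected assignment equals its treatment probability
    (∀ t, t + 1 ≤ n - I₀.card →
      P[fun ω => A (π (t+1) ω) ω | ℱ t] =ᵐ[P] fun ω => μ (π (t+1) ω)) ∧
    -- equivalently, on the event `{π (t+1) = j}` one has `E(A j | ℱ t) = μ j`
    (∀ t, t + 1 ≤ n - I₀.card → ∀ j : Fin n,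
      ∀ᵐ ω ∂P, π (t+1) ω = j → (P[A j | ℱ t]) ω = μ j) := by
  classical
  set N := n - I₀.card with hN
  let m : Option (Fin n) → MeasurableSpace Ω := fun j =>
    j.elim 𝒢 (fun i => MeasurableSpace.comap (A i) inferInstance)
  have hm_le : ∀ j, m j ≤ m0 := by
    rintro (_ | i)
    · exact h𝒢
    · exact (hAmeas i).comap_le
  let H : Fin n → MeasurableSpace Ω := fun j => ⨆ i ∈ ({some j}ᶜ : Set (Option (Fin n))), m i
  have hH_le : ∀ j, H j ≤ m0 := fun j => iSup₂_le fun i _ => hm_le i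
  have hmH : ∀ j i, i ≠ some j → m i ≤ H j := fun j i hi =>
    le_iSup₂_of_le (f := fun i (_ : i ∈ ({some j}ᶜ : Set (Option (Fin n)))) => m i) i hi le_rfl
  have hAint : ∀ j, Integrable (A j) P := by
    intro j
    refine Integrable.of_bound (hAmeas j).aestronglyMeasurable 1 (ae_of_all _ fun ω => ?_)
    rcases hA01 j ω with h | h <;> simp [h]
  have hmean : ∀ j, ∫ ω, A j ω ∂P = μ j := by
    intro j
    have h1 : A j = Set.indicator {ω | A j ω = 1} (fun _ => (1:ℝ)) := by
      ext ω
      rcases hA01 j ω with h | h <;> simp [Set.indicator, h]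
    have h2 : MeasurableSet[m0] {ω | A j ω = 1} := hAmeas j (measurableSet_singleton 1)
    rw [h1, integral_indicator h2]
    simp [Measure.real, hA1, (hμ j).1.le]
  have hkey : ∀ j u, MeasurableSet[H j] u → ∫ ω in u, A j ω ∂P = ∫ ω in u, μ j ∂P := by
    intro j u hu
    have hind : Indep (m (some j)) (H j) P := by
      have := indep_iSup_of_disjoint hm_le hindep
        (S := {some j}) (T := {some j}ᶜ) disjoint_compl_right
      simpa [H] using this
    have h1 := condExp_indep_eq (hm_le (some j)) (hH_le j)
      (f := A j) (Measurable.stronglyMeasurable (comap_measurable (A j))) hind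
    rw [← setIntegral_condExp (hH_le j) (hAint j) hu]
    refine setIntegral_congr_ae (hH_le j _ hu) ?_
    filter_upwards [h1] with ω hω _
    rw [hω, hmean]
  have hclaim : ∀ t, t ≤ N → ℱ t ≤ m0 ∧ ∀ j s, MeasurableSet[ℱ t] s →
      MeasurableSet[H j] (s ∩ {ω | j ∉ I t ω}) := by
    intro t
    induction t with
    | zero =>
      intro _
      refine ⟨?_, ?_⟩
      · rw [hℱ0]
        exact sup_le h𝒢 (iSup₂_le fun i _ => (hAmeas i).comap_le)
      · intro j s hs
        by_cases hj : j ∈ I₀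
        · simp [hI0, hj]
        · simp only [hI0, hj, not_false_eq_true, Set.ofPred_true, Set.inter_univ]
          have : ℱ 0 ≤ H j := by
            rw [hℱ0]
            refine sup_le (hmH j none (by simp)) (iSup₂_le fun i hi => hmH j (some i) ?_)
            rintro h
            cases h
            exact hj hi
          exact this _ hs
    | succ t ih =>
      intro ht
      obtain ⟨ih1, ih2⟩ := ih (by omega)
      have hπt := hπmeas t ht
      have hπk : ∀ k, MeasurableSet[ℱ t] {ω | π (t+1) ω = k} := fun k =>
        hπt (MeasurableSet.of_discrete (s := {k}))
      refine ⟨?_, ?_⟩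
      · rw [hℱsucc t ht]
        refine sup_le ih1 ?_
        rintro _ ⟨B, hB, rfl⟩
        have : (fun ω => A (π (t+1) ω) ω) ⁻¹' B
            = ⋃ k, ({ω | π (t+1) ω = k} ∩ A k ⁻¹' B) := by
          ext ω; simp
        rw [this]
        exact MeasurableSet.iUnion fun k => (ih1 _ (hπk k)).inter (hAmeas k hB)
      · intro j
        have hEeq : {ω | j ∉ I (t+1) ω} = {ω | π (t+1) ω = j}ᶜ ∩ {ω | j ∉ I t ω} := by
          ext ω
          simp [hIsucc t ht, eq_comm]
        have hE : MeasurableSet[H j] {ω | j ∉ I (t+1) ω} := by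
          rw [hEeq]; exact ih2 j _ (hπk j).compl
        have hle : ℱ (t+1) ≤ ibetTrace (H j) _ hE := by
          rw [hℱsucc t ht]
          refine sup_le ?_ ?_
          · intro s hs
            change MeasurableSet[H j] (s ∩ _)
            rw [hEeq, ← Set.inter_assoc]
            exact ih2 j _ (hs.inter (hπk j).compl)
          · rintro _ ⟨B, hB, rfl⟩
            change MeasurableSet[H j] (_ ∩ _)
            have : (fun ω => A (π (t+1) ω) ω) ⁻¹' B ∩ {ω | j ∉ I (t+1) ω}
                = ⋃ k, ⋃ (_ : k ≠ j),
                  (({ω | π (t+1) ω = k} ∩ {ω | j ∉ I t ω}) ∩ A k ⁻¹' B) := by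
              rw [hEeq]
              ext ω; simp; tauto
            rw [this]
            refine MeasurableSet.iUnion fun k => MeasurableSet.iUnion fun hk => ?_
            refine (ih2 j _ (hπk k)).inter (hmH j (some k) (by simpa using hk) _ ⟨B, hB, rfl⟩)
        exact fun s hs => hle s hs
  have h2 : ∀ t, t + 1 ≤ N → ∀ j : Fin n,
      ∀ᵐ ω ∂P, π (t+1) ω = j → (P[A j | ℱ t]) ω = μ j := by
    intro t ht j
    obtain ⟨hle, hc⟩ := hclaim t (by omega)
    have hπj : MeasurableSet[ℱ t] {ω | π (t+1) ω = j} :=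
      hπmeas t ht (MeasurableSet.of_discrete (s := {j}))
    have e1 := condExp_indicator (hAint j) hπj
    have e2 : ({ω | π (t+1) ω = j}.indicator fun _ => μ j) =ᵐ[P]
        P[{ω | π (t+1) ω = j}.indicator (A j) | ℱ t] := by
      refine ae_eq_condExp_of_forall_setIntegral_eq hle
        ((hAint j).indicator (hle _ hπj)) ?_ ?_ ?_
      · intro s _ _
        exact ((integrable_const _).indicator (hle _ hπj)).integrableOn
      · intro s hs _
        rw [setIntegral_indicator (hle _ hπj), setIntegral_indicator (hle _ hπj)]
        refine (hkey j _ ?_).symm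
        have := hc j _ (hs.inter hπj)
        rwa [Set.inter_eq_left.2] at this
        rintro ω ⟨_, hω⟩
        have := hπnew t ht ω
        rw [Set.mem_ofPred_eq] at hω
        rwa [hω] at this
      · exact (stronglyMeasurable_const.indicator hπj).aestronglyMeasurable
    filter_upwards [e1, e2] with ω h1 h2 hω
    rw [h1] at h2
    simpa [Set.indicator, hω] using h2.symm
  refine ⟨?_, h2⟩
  intro t ht
  obtain ⟨hle, -⟩ := hclaim t (by omega)
  have hπj : ∀ j, MeasurableSet[ℱ t] {ω | π (t+1) ω = j} := fun j =>
    hπmeas t ht (MeasurableSet.of_discrete (s := {j}))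
  have hmeas : Measurable[m0] (fun ω => A (π (t+1) ω) ω) := by
    intro B hB
    have : (fun ω => A (π (t+1) ω) ω) ⁻¹' B
        = ⋃ k, ({ω | π (t+1) ω = k} ∩ A k ⁻¹' B) := by
      ext ω; simp
    rw [this]
    exact MeasurableSet.iUnion fun k => (hle _ (hπj k)).inter (hAmeas k hB)
  have hint : Integrable (fun ω => A (π (t+1) ω) ω) P := by
    refine Integrable.of_bound hmeas.aestronglyMeasurable 1 (ae_of_all _ fun ω => ?_)
    rcases hA01 (π (t+1) ω) ω with h | h <;> simp [h]
  have hall : ∀ᵐ ω ∂P, ∀ j, π (t+1) ω = j →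
      (P[fun ω => A (π (t+1) ω) ω | ℱ t]) ω = μ j := by
    rw [ae_all_iff]
    intro j
    have e1 := condExp_indicator (hAint j) (hπj j)
    have e2 := condExp_indicator hint (hπj j)
    have e3 : {ω | π (t+1) ω = j}.indicator (fun ω => A (π (t+1) ω) ω)
        = {ω | π (t+1) ω = j}.indicator (A j) := by
      ext ω
      by_cases h : π (t+1) ω = j <;> simp [Set.indicator, h]
    rw [e3] at e2
    filter_upwards [e1, e2, h2 t ht j] with ω a b c hω
    rw [a] at b
    rw [← c hω]
    simpa [Set.indicator, hω] using b.symm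
  filter_upwards [hall] with ω h
  exact h _ rfl
end

section
/- Sampling without replacement (completely randomized experiment): under the global causal null, define the predictable probabilities μ_t = (m − Σ_{i ∈ I_{t−1}} A_i)/(n − |I_{t−1}|), let w_t be ℱ_{t−1}-measurable with w_t ∈ [−μ_t/(1−μ_t), 1] almost surely (on the event μ_t ∈ (0,1)), and set M_0 = 1, M_t = ∏_{j=1}^t [1 + w_j·(A_{π_j}/μ_j − 1)]. Then (M_t) is a nonnegative martingale with respect to (ℱ_t), and consequently for every α ∈ (0,1), P(∃ t : M_t ≥ 1/α) ≤ α. -/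
open MeasureTheory ProbabilityTheory
open scoped ENNReal

lemma ibet_law_symm
    {Ω : Type*} {m0 : MeasurableSpace Ω} (P : Measure Ω)
    (n m : ℕ) (A : Fin n → Ω → ℝ) (hAmeas : ∀ i, Measurable (A i))
    (hA01 : ∀ i ω, A i ω = 0 ∨ A i ω = 1)
    (hAsum : ∀ ω, ∑ i, A i ω = (m : ℝ))
    (hAunif : ∀ v : Fin n → ℝ, (∀ i, v i = 0 ∨ v i = 1) → (∑ i, v i) = (m : ℝ) →
      P {ω | ∀ i, A i ω = v i} = ((n.choose m : ℝ≥0∞))⁻¹)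
    (T : Set (Fin n → ℝ)) (σ : Equiv.Perm (Fin n)) :
    P {ω | (fun j => A j ω) ∈ T} = P {ω | (fun j => A (σ j) ω) ∈ T} := by
  classical
  let V : Finset (Fin n → ℝ) :=
    (Fintype.piFinset (fun _ => ({0, 1} : Finset ℝ))).filter (fun v => ∑ i, v i = (m : ℝ))
  have hV : ∀ v, v ∈ V ↔ (∀ i, v i = 0 ∨ v i = 1) ∧ (∑ i, v i) = (m : ℝ) := by
    intro v; simp [V]
  have key : ∀ T : Set (Fin n → ℝ), P {ω | (fun j => A j ω) ∈ T}
      = ((V.filter (· ∈ T)).card : ℝ≥0∞) * ((n.choose m : ℝ≥0∞))⁻¹ := by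
    intro T
    have h1 : {ω | (fun j => A j ω) ∈ T}
        = ⋃ v ∈ V.filter (· ∈ T), {ω | ∀ i, A i ω = v i} := by
      ext ω
      simp only [Set.mem_ofPred_eq, Set.mem_iUnion, Finset.mem_filter, exists_prop]
      constructor
      · intro h
        exact ⟨fun j => A j ω, ⟨(hV _).2 ⟨fun i => hA01 i ω, hAsum ω⟩, h⟩, fun i => rfl⟩
      · rintro ⟨v, ⟨_, h⟩, h2⟩
        have : (fun j => A j ω) = v := funext h2
        rwa [this]
    rw [h1, measure_biUnion_finset]
    · rw [Finset.sum_congr rfl (g := fun _ => ((n.choose m : ℝ≥0∞))⁻¹)]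
      · simp
      · intro v hv
        have := (hV v).1 (Finset.mem_filter.1 hv).1
        exact hAunif v this.1 this.2
    · intro v _ v' _ hne
      rw [Function.onFun, Set.disjoint_left]
      intro ω h h'
      apply hne
      funext i
      rw [← h i, ← h' i]
    · intro v _
      have : {ω | ∀ i, A i ω = v i} = ⋂ i, A i ⁻¹' {v i} := by ext; simp
      rw [this]
      exact MeasurableSet.iInter fun i => hAmeas i (measurableSet_singleton _)
  have h2 : {ω | (fun j => A (σ j) ω) ∈ T}
      = {ω | (fun j => A j ω) ∈ {v : Fin n → ℝ | (fun j => v (σ j)) ∈ T}} := rfl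
  rw [h2, key, key]
  congr 2
  refine Finset.card_bij' (fun v _ => fun j => v (σ.symm j)) (fun v _ => fun j => v (σ j))
    ?_ ?_ ?_ ?_
  · intro v hv
    rw [Finset.mem_filter, hV] at hv ⊢
    refine ⟨⟨fun i => hv.1.1 _, ?_⟩, ?_⟩
    · rw [Equiv.sum_comp σ.symm v]; exact hv.1.2
    · simpa using hv.2
  · intro v hv
    rw [Finset.mem_filter, hV] at hv ⊢
    refine ⟨⟨fun i => hv.1.1 _, ?_⟩, hv.2⟩
    rw [Equiv.sum_comp σ v]; exact hv.1.2
  · intro v _; simp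
  · intro v _; simp

lemma ibet_cyl {Ω : Type*} {n : ℕ} (A : Fin n → Ω → ℝ) (S : Finset (Fin n)) (F : Set Ω)
    (hF : MeasurableSet[⨆ i ∈ S, MeasurableSpace.comap (A i) inferInstance] F) :
    ∃ T : Set (Fin n → ℝ), F = {ω | (fun j => A j ω) ∈ T} ∧
      ∀ v v' : Fin n → ℝ, (∀ j ∈ S, v j = v' j) → (v ∈ T ↔ v' ∈ T) := by
  have hle : (⨆ i ∈ S, MeasurableSpace.comap (A i) inferInstance)
      ≤ MeasurableSpace.comap (fun ω => fun j : S => A j ω) inferInstance := by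
    refine iSup₂_le fun i hi => ?_
    rw [← measurable_iff_comap_le]
    exact (measurable_pi_apply (⟨i, hi⟩ : S)).comp
      (comap_measurable (fun ω => fun j : S => A j ω))
  obtain ⟨D, _, hD⟩ := hle F hF
  refine ⟨{v | (fun j : S => v j) ∈ D}, hD.symm, ?_⟩
  intro v v' h
  have : (fun j : S => v j) = (fun j : S => v' j) := funext fun j => h j j.2
  simp [this]

lemma ibet_exch
    {Ω : Type*} {m0 : MeasurableSpace Ω} (P : Measure Ω) [IsProbabilityMeasure P]
    (n m : ℕ) (A : Fin n → Ω → ℝ) (hAmeas : ∀ i, Measurable (A i))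
    (hA01 : ∀ i ω, A i ω = 0 ∨ A i ω = 1)
    (hAsum : ∀ ω, ∑ i, A i ω = (m : ℝ))
    (hAunif : ∀ v : Fin n → ℝ, (∀ i, v i = 0 ∨ v i = 1) → (∑ i, v i) = (m : ℝ) →
      P {ω | ∀ i, A i ω = v i} = ((n.choose m : ℝ≥0∞))⁻¹)
    (𝒢 : MeasurableSpace Ω) (h𝒢 : 𝒢 ≤ m0)
    (hindep : Indep (⨆ i, MeasurableSpace.comap (A i) inferInstance) 𝒢 P)
    (S : Finset (Fin n)) (i k : Fin n) (hi : i ∉ S) (hk : k ∉ S) (E : Set Ω)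
    (hE : MeasurableSet[𝒢 ⊔ ⨆ i ∈ S, MeasurableSpace.comap (A i) inferInstance] E) :
    P (E ∩ {ω | A i ω = 1}) = P (E ∩ {ω | A k ω = 1}) := by
  have hAS : (⨆ i ∈ S, MeasurableSpace.comap (A i) inferInstance)
      ≤ ⨆ i, MeasurableSpace.comap (A i) inferInstance :=
    iSup₂_le fun i _ => le_iSup (fun i => MeasurableSpace.comap (A i) inferInstance) i
  have hAm : (⨆ i, MeasurableSpace.comap (A i) inferInstance) ≤ m0 :=
    iSup_le fun i => (hAmeas i).comap_le
  have hle : (𝒢 ⊔ ⨆ i ∈ S, MeasurableSpace.comap (A i) inferInstance) ≤ m0 :=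
    sup_le h𝒢 (hAS.trans hAm)
  have h1 : ∀ i, MeasurableSet[m0] {ω | A i ω = 1} := fun i =>
    hAmeas i (measurableSet_singleton _)
  have h1' : ∀ i, MeasurableSet[⨆ i, MeasurableSpace.comap (A i) inferInstance]
      {ω | A i ω = 1} := fun i =>
    (le_iSup (fun i => MeasurableSpace.comap (A i) inferInstance) i) _
      ⟨{1}, measurableSet_singleton _, rfl⟩
  let C : Set (Set Ω) := {E | ∃ G F, MeasurableSet[𝒢] G ∧
    MeasurableSet[⨆ i ∈ S, MeasurableSpace.comap (A i) inferInstance] F ∧ E = G ∩ F}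
  have hbase : ∀ F, MeasurableSet[⨆ i ∈ S, MeasurableSpace.comap (A i) inferInstance] F →
      P (F ∩ {ω | A i ω = 1}) = P (F ∩ {ω | A k ω = 1}) := by
    intro F hF
    obtain ⟨T, rfl, hT⟩ := ibet_cyl A S F hF
    have := ibet_law_symm P n m A hAmeas hA01 hAsum hAunif (T ∩ {v | v i = 1}) (Equiv.swap i k)
    refine Eq.trans this ?_
    congr 1
    ext ω
    simp only [Set.mem_ofPred_eq, Set.mem_inter_iff, Equiv.swap_apply_left]
    rw [hT _ (fun j => A j ω)]
    intro j hj
    rw [Equiv.swap_apply_of_ne_of_ne] <;> rintro rfl <;> contradiction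
  have hC : ∀ s ∈ C, P.restrict {ω | A i ω = 1} s = P.restrict {ω | A k ω = 1} s := by
    rintro s ⟨G, F, hG, hF, rfl⟩
    have hGm : MeasurableSet[m0] G := h𝒢 _ hG
    have hFm : MeasurableSet[m0] F := hAm _ (hAS _ hF)
    rw [Measure.restrict_apply (hGm.inter hFm), Measure.restrict_apply (hGm.inter hFm),
      Set.inter_assoc, Set.inter_assoc, Set.inter_comm G, Set.inter_comm G,
      (Indep_iff _ _ _).1 hindep _ _ ((hAS _ hF).inter (h1' i)) hG,
      (Indep_iff _ _ _).1 hindep _ _ ((hAS _ hF).inter (h1' k)) hG, hbase F hF]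
  have hgen : (𝒢 ⊔ ⨆ i ∈ S, MeasurableSpace.comap (A i) inferInstance)
      = MeasurableSpace.generateFrom C := by
    apply le_antisymm
    · refine sup_le ?_ ?_
      · intro G hG
        exact MeasurableSpace.measurableSet_generateFrom
          ⟨G, Set.univ, hG, MeasurableSet.univ, by simp⟩
      · intro F hF
        exact MeasurableSpace.measurableSet_generateFrom
          ⟨Set.univ, F, MeasurableSet.univ, hF, by simp⟩
    · apply MeasurableSpace.generateFrom_le
      rintro s ⟨G, F, hG, hF, rfl⟩
      exact MeasurableSet.inter ((le_sup_left : 𝒢 ≤ _) _ hG)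
        ((le_sup_right : _ ≤ 𝒢 ⊔ _) _ hF)
  have hpi : IsPiSystem C := by
    rintro s ⟨G, F, hG, hF, rfl⟩ s' ⟨G', F', hG', hF', rfl⟩ _
    exact ⟨G ∩ G', F ∩ F', hG.inter hG', hF.inter hF', by rw [Set.inter_inter_inter_comm]⟩
  have huniv := hC Set.univ ⟨Set.univ, Set.univ, MeasurableSet.univ, MeasurableSet.univ, by simp⟩
  have := ext_on_measurableSpace_of_generate_finite m0 C hC hle hgen hpi huniv hE
  rwa [Measure.restrict_apply (hle _ hE), Measure.restrict_apply (hle _ hE)] at this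

lemma ibet_step_struct {Ω : Type*} {n : ℕ} (A : Fin n → Ω → ℝ)
    (𝒢 : MeasurableSpace Ω) (F F' : MeasurableSpace Ω) (J J' : Ω → Finset (Fin n))
    (q : Ω → Fin n) (hJ' : ∀ ω, J' ω = insert (q ω) (J ω)) (hq : ∀ ω, q ω ∉ J ω)
    (hqm : Measurable[F] q)
    (hF' : F' = F ⊔ MeasurableSpace.comap (fun ω => A (q ω) ω) inferInstance)
    (H : Finset (Fin n) → MeasurableSpace Ω)
    (hH : ∀ S, H S = 𝒢 ⊔ ⨆ i ∈ S, MeasurableSpace.comap (A i) inferInstance)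
    (hJm : ∀ S, MeasurableSet[F] {ω | J ω = S})
    (ih : ∀ B, MeasurableSet[F] B → ∀ S, MeasurableSet[H S] (B ∩ {ω | J ω = S})) :
    (∀ S, MeasurableSet[F'] {ω | J' ω = S}) ∧
    (∀ B, MeasurableSet[F'] B → ∀ S, MeasurableSet[H S] (B ∩ {ω | J' ω = S})) := by
  classical
  have hmono : ∀ S S', S ⊆ S' → H S ≤ H S' := by
    intro S S' h
    rw [hH, hH]
    exact sup_le_sup_left (biSup_mono fun i hi => h hi) _
  have hAH : ∀ S, ∀ k ∈ S, Measurable[H S] (A k) := by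
    intro S k hk
    rw [measurable_iff_comap_le, hH]
    exact le_sup_of_le_right
      (le_iSup₂ (f := fun i (_ : i ∈ S) => MeasurableSpace.comap (A i) inferInstance) k hk)
  have hFF' : F ≤ F' := hF' ▸ le_sup_left
  have hqk : ∀ k, MeasurableSet[F] {ω | q ω = k} := fun k => hqm (measurableSet_singleton k)
  have hdec : ∀ S, {ω | J' ω = S} = ⋃ k : S, ({ω | q ω = k} ∩ {ω | J ω = S.erase k}) := by
    intro S
    ext ω
    simp only [Set.mem_ofPred_eq, Set.mem_iUnion, Set.mem_inter_iff]
    constructor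
    · rintro rfl
      refine ⟨⟨q ω, by simp [hJ']⟩, rfl, ?_⟩
      simp [hJ', hq]
    · rintro ⟨⟨k, hk⟩, h1, h2⟩
      simp only at h1 h2
      rw [hJ', h1, h2, Finset.insert_erase hk]
  have hpiece : ∀ B, MeasurableSet[F] B → ∀ S : Finset (Fin n), ∀ k : S,
      MeasurableSet[H S] (B ∩ ({ω | q ω = k} ∩ {ω | J ω = S.erase k})) := by
    intro B hB S k
    have := ih (B ∩ {ω | q ω = k}) (MeasurableSet.inter hB (hqk k)) (S.erase k)
    rw [Set.inter_assoc] at this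
    exact hmono _ _ (Finset.erase_subset _ _) _ this
  have hX : ∀ S, MeasurableSet[H S] {ω | J' ω = S} := by
    intro S
    rw [hdec]
    refine MeasurableSet.iUnion fun k => ?_
    simpa using hpiece Set.univ MeasurableSet.univ S k
  constructor
  · intro S
    rw [hdec]
    exact MeasurableSet.iUnion fun k => hFF' _ (MeasurableSet.inter (hqk k) (hJm _))
  · let mm : MeasurableSpace Ω :=
      { MeasurableSet' := fun B => ∀ S, MeasurableSet[H S] (B ∩ {ω | J' ω = S})
        measurableSet_empty := by intro S; simp
        measurableSet_compl := by
          intro B hB S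
          have : Bᶜ ∩ {ω | J' ω = S} = {ω | J' ω = S} \ (B ∩ {ω | J' ω = S}) := by
            ext ω; simp; tauto
          rw [this]
          exact MeasurableSet.diff (hX S) (hB S)
        measurableSet_iUnion := by
          intro f hf S
          rw [Set.iUnion_inter]
          exact MeasurableSet.iUnion fun i => hf i S }
    have hle : F' ≤ mm := by
      rw [hF']
      refine sup_le ?_ ?_
      · intro B hB S
        rw [hdec, Set.inter_iUnion]
        exact MeasurableSet.iUnion fun k => hpiece B hB S k
      · rintro B ⟨D, hD, rfl⟩ S
        rw [hdec, Set.inter_iUnion]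
        refine MeasurableSet.iUnion fun k => ?_
        have : (fun ω => A (q ω) ω) ⁻¹' D ∩ ({ω | q ω = k} ∩ {ω | J ω = S.erase k})
            = (A k ⁻¹' D) ∩ (Set.univ ∩ ({ω | q ω = k} ∩ {ω | J ω = S.erase k})) := by
          ext ω
          simp only [Set.mem_inter_iff, Set.mem_preimage, Set.mem_ofPred_eq, Set.mem_univ, true_and]
          constructor
          · rintro ⟨h1, h2, h3⟩; rw [h2] at h1; exact ⟨h1, h2, h3⟩
          · rintro ⟨h1, h2, h3⟩; rw [h2]; exact ⟨h1, rfl, h3⟩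
        rw [this]
        exact MeasurableSet.inter (hAH S k k.2 hD) (hpiece Set.univ MeasurableSet.univ S k)
    exact fun B hB => hle B hB

lemma ibet_cond
    {Ω : Type*} {m0 : MeasurableSpace Ω} (P : Measure Ω) [IsProbabilityMeasure P]
    (n m : ℕ) (A : Fin n → Ω → ℝ) (hAmeas : ∀ i, Measurable (A i))
    (hA01 : ∀ i ω, A i ω = 0 ∨ A i ω = 1)
    (hAsum : ∀ ω, ∑ i, A i ω = (m : ℝ))
    (H : Finset (Fin n) → MeasurableSpace Ω)
    (hexch : ∀ (S : Finset (Fin n)) (i k : Fin n), i ∉ S → k ∉ S → ∀ E : Set Ω,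
      MeasurableSet[H S] E → P (E ∩ {ω | A i ω = 1}) = P (E ∩ {ω | A k ω = 1}))
    (F : MeasurableSpace Ω) (hF : F ≤ m0) (J : Ω → Finset (Fin n))
    (q : Ω → Fin n) (hq : ∀ ω, q ω ∉ J ω) (hqm : Measurable[F] q)
    (hJm : ∀ S, MeasurableSet[F] {ω | J ω = S})
    (ih : ∀ B, MeasurableSet[F] B → ∀ S, MeasurableSet[H S] (B ∩ {ω | J ω = S}))
    (f g : Ω → ℝ) (hf : ∀ ω, f ω = A (q ω) ω)
    (hg : ∀ ω, g ω = ((m : ℝ) - ∑ i ∈ J ω, A i ω) / ((n : ℝ) - (J ω).card))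
    (hfi : Integrable f P) (hgi : Integrable g P)
    (E : Set Ω) (hE : MeasurableSet[F] E) :
    ∫ ω in E, g ω ∂P = ∫ ω in E, f ω ∂P := by
  classical
  have hqk : ∀ k, MeasurableSet[F] {ω | q ω = k} := fun k => hqm (measurableSet_singleton k)
  let s : Finset (Fin n) × Fin n → Set Ω := fun p => (E ∩ {ω | q ω = p.2}) ∩ {ω | J ω = p.1}
  have hsF : ∀ p, MeasurableSet[F] (s p) := fun p =>
    MeasurableSet.inter (MeasurableSet.inter hE (hqk _)) (hJm _)
  have hs : ∀ p, MeasurableSet[m0] (s p) := fun p => hF _ (hsF p)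
  have hEs : E = ⋃ p ∈ (Finset.univ : Finset (Finset (Fin n) × Fin n)), s p := by
    ext ω
    simp [s]
  have hdisj : Set.Pairwise (↑(Finset.univ : Finset (Finset (Fin n) × Fin n)))
      (Function.onFun Disjoint s) := by
    intro p _ p' _ hne
    rw [Function.onFun, Set.disjoint_left]
    rintro ω ⟨⟨_, h1⟩, h2⟩ ⟨⟨_, h1'⟩, h2'⟩
    apply hne
    simp only [Set.mem_ofPred_eq] at h1 h2 h1' h2'
    exact Prod.ext (h2 ▸ h2') (h1 ▸ h1')
  have hAi : ∀ i, Integrable (A i) P := fun i =>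
    Integrable.of_bound (hAmeas i).aestronglyMeasurable 1 (ae_of_all _ fun ω => by
      rcases hA01 i ω with h | h <;> simp [h])
  have hAint : ∀ i, ∀ D, MeasurableSet[m0] D →
      ∫ ω in D, A i ω ∂P = (P (D ∩ {ω | A i ω = 1})).toReal := by
    intro i D hD
    have h1 : MeasurableSet[m0] {ω | A i ω = 1} := hAmeas i (measurableSet_singleton _)
    have h2 : A i = Set.indicator {ω | A i ω = 1} (fun _ => (1:ℝ)) := by
      funext ω
      rcases hA01 i ω with h | h <;> simp [Set.indicator, h]
    conv_lhs => rw [h2]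
    rw [integral_indicator h1]
    simp [Measure.real, Measure.restrict_apply h1, Set.inter_comm]
  rw [hEs, integral_biUnion_finset _ (fun p _ => hs p) hdisj (fun p _ => hgi.integrableOn),
    integral_biUnion_finset _ (fun p _ => hs p) hdisj (fun p _ => hfi.integrableOn)]
  refine Finset.sum_congr rfl ?_
  rintro ⟨S, k⟩ _
  by_cases hk : k ∈ S
  · have : s (S, k) = ∅ := by
      ext ω
      simp only [s, Set.mem_inter_iff, Set.mem_ofPred_eq, Set.mem_empty_iff_false, iff_false]
      rintro ⟨⟨_, h1⟩, h2⟩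
      apply hq ω
      rw [h1, h2]; exact hk
    simp [this]
  · have hH : MeasurableSet[H S] (s (S, k)) := ih _ (MeasurableSet.inter hE (hqk _)) S
    set D := s (S, k) with hD
    have hDm : MeasurableSet[m0] D := hs _
    have e1 : ∫ ω in D, f ω ∂P = ∫ ω in D, A k ω ∂P := by
      refine setIntegral_congr_fun hDm ?_
      rintro ω ⟨⟨_, h1⟩, h2⟩
      simp only [Set.mem_ofPred_eq] at h1
      simp only [hf, h1]
    have e2 : ∫ ω in D, g ω ∂P
        = ∫ ω in D, (∑ i ∈ Sᶜ, A i ω) / ((n : ℝ) - S.card) ∂P := by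
      refine setIntegral_congr_fun hDm ?_
      rintro ω ⟨⟨_, h1⟩, h2⟩
      simp only [Set.mem_ofPred_eq] at h2
      simp only [hg, h2]
      rw [← hAsum ω, ← Finset.sum_add_sum_compl S]
      ring
    have e3 : ∀ i ∈ Sᶜ, ∫ ω in D, A i ω ∂P = ∫ ω in D, A k ω ∂P := by
      intro i hi
      rw [hAint i D hDm, hAint k D hDm, hexch S i k (by simpa using hi) hk D hH]
    rw [e1, e2, integral_div, integral_finsetSum _ (fun i _ => (hAi i).integrableOn),
      Finset.sum_congr rfl e3, Finset.sum_const, nsmul_eq_mul]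
    have hcard : ((Sᶜ.card : ℕ) : ℝ) = (n : ℝ) - S.card := by
      rw [Finset.card_compl, Fintype.card_fin, Nat.cast_sub]
      simpa using Finset.card_le_univ S
    have hpos : (0 : ℝ) < Sᶜ.card := by
      have : 0 < Sᶜ.card := Finset.card_pos.2 ⟨k, by simpa using hk⟩
      exact_mod_cast this
    rw [← hcard]
    rw [mul_div_cancel_left₀ _ hpos.ne']

lemma ibet_mu (n m : ℕ) (a : Fin n → ℝ) (ha : ∀ i, a i = 0 ∨ a i = 1)
    (hsum : ∑ i, a i = (m : ℝ)) (S : Finset (Fin n)) (k : Fin n) (hk : k ∉ S) (μ : ℝ)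
    (hμ : μ = ((m : ℝ) - ∑ i ∈ S, a i) / ((n : ℝ) - S.card)) :
    0 ≤ μ ∧ μ ≤ 1 ∧ (μ ∈ Set.Ioo (0:ℝ) 1 → 1 ≤ n * μ ∧ 1 ≤ n * (1 - μ)) := by
  classical
  have hcard : ((Sᶜ.card : ℕ) : ℝ) = (n : ℝ) - S.card := by
    rw [Finset.card_compl, Fintype.card_fin, Nat.cast_sub]
    simpa using Finset.card_le_univ S
  have hpos : (0 : ℝ) < Sᶜ.card := by
    have : 0 < Sᶜ.card := Finset.card_pos.2 ⟨k, by simpa using hk⟩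
    exact_mod_cast this
  have hdn : (Sᶜ.card : ℝ) ≤ n := by
    have : Sᶜ.card ≤ n := by simpa using Finset.card_le_univ Sᶜ
    exact_mod_cast this
  obtain ⟨c, hc⟩ : ∃ c : ℕ, ∑ i ∈ Sᶜ, a i = c := by
    refine ⟨(Sᶜ.filter (fun i => a i = 1)).card, ?_⟩
    rw [Finset.card_filter, Nat.cast_sum]
    refine Finset.sum_congr rfl fun i _ => ?_
    rcases ha i with h | h <;> simp [h]
  have hcd : c ≤ Sᶜ.card := by
    have : (c : ℝ) ≤ Sᶜ.card := by
      rw [← hc]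
      calc ∑ i ∈ Sᶜ, a i ≤ ∑ i ∈ Sᶜ, (1 : ℝ) := Finset.sum_le_sum fun i _ => by
            rcases ha i with h | h <;> simp [h]
        _ = _ := by simp
    exact_mod_cast this
  have hμ' : μ = c / Sᶜ.card := by
    rw [hμ, hcard, ← hc, ← hsum, ← Finset.sum_add_sum_compl S]
    ring
  generalize Sᶜ.card = d at *
  have hcd' : (c : ℝ) ≤ d := by exact_mod_cast hcd
  have hdμ : d * μ = c := by rw [hμ']; field_simp
  refine ⟨by rw [hμ']; positivity, by rw [hμ']; exact div_le_one_of_le₀ hcd' hpos.le, ?_⟩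
  rintro ⟨h0, h1⟩
  have hc0 : 0 < (c : ℝ) := by rw [← hdμ]; positivity
  have hc1 : (c : ℝ) < d := by rw [← hdμ]; nlinarith
  have hc0' : 1 ≤ (c : ℝ) := by
    have : 0 < c := by exact_mod_cast hc0
    exact_mod_cast this
  have hc1' : (c : ℝ) + 1 ≤ d := by
    have : c < d := by exact_mod_cast hc1
    exact_mod_cast this
  constructor <;> nlinarith

lemma ibet_factor (N μ w a : ℝ) (hN : 0 ≤ N) (ha : a = 0 ∨ a = 1)
    (hμ : μ ∈ Set.Ioo (0:ℝ) 1 → 1 ≤ N * μ ∧ 1 ≤ N * (1 - μ))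
    (hw : μ ∈ Set.Ioo (0:ℝ) 1 → w ∈ Set.Icc (-(μ / (1 - μ))) 1)
    (hw0 : μ ∉ Set.Ioo (0:ℝ) 1 → w = 0) :
    0 ≤ 1 + w * (a / μ - 1) ∧ 1 + w * (a / μ - 1) = 1 + w / μ * (a - μ) ∧ |w / μ| ≤ N := by
  by_cases h : μ ∈ Set.Ioo (0:ℝ) 1
  · obtain ⟨hn1, hn2⟩ := hμ h
    obtain ⟨hl, hu⟩ := hw h
    obtain ⟨h0, h1⟩ := h
    have h1' : 0 < 1 - μ := by linarith
    have hl' : -μ ≤ w * (1 - μ) := by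
      rw [← neg_div, div_le_iff₀ h1'] at hl; exact hl
    refine ⟨?_, by field_simp, ?_⟩
    · rcases ha with rfl | rfl
      · simp; linarith
      · have : 1 + w * (1 / μ - 1) = (μ + w * (1 - μ)) / μ := by field_simp
        rw [this]
        apply div_nonneg _ h0.le
        linarith
    · rw [abs_le, le_div_iff₀ h0, div_le_iff₀ h0]
      constructor
      · have : -μ ≤ w * (1 - μ) := hl'
        have h3 : μ * 1 ≤ μ * (N * (1 - μ)) := mul_le_mul_of_nonneg_left hn2 h0.le
        have h4 : (-N * μ) * (1 - μ) ≤ w * (1 - μ) := by nlinarith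
        exact le_of_mul_le_mul_right h4 h1'
      · linarith
  · simp [hw0 h, hN]

/-- **Sampling without replacement (completely randomized experiment).**
Under the global causal null, with `(A 1, …, A n)` uniformly distributed over binary vectors
summing to `m` and independent of `𝒢`, the conditional expectation of the interactively
selected assignment given the revealed information equals the remaining proportion of
treatments; defining the predictable probabilities `μR t` accordingly and betting
`w t ∈ [−μR t/(1−μR t), 1]` (on the event `μR t ∈ (0,1)`), the wealth process
`M t = ∏_{j≤t} [1 + w j (A (π j)/μR j − 1)]` is a nonnegative martingale, and consequently
`P(∃ t, M t ≥ 1/α) ≤ α` for every `α ∈ (0,1)`. -/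
theorem ibet_without_replacement_martingale_ville
    {Ω : Type*} {m0 : MeasurableSpace Ω} (P : Measure Ω) [IsProbabilityMeasure P]
    (n m : ℕ) (hm : 1 ≤ m) (hmn : m ≤ n - 1)
    -- the treatment assignments: a uniformly random binary vector with sum `m`
    (A : Fin n → Ω → ℝ) (hAmeas : ∀ i, Measurable (A i))
    (hA01 : ∀ i ω, A i ω = 0 ∨ A i ω = 1)
    (hAsum : ∀ ω, ∑ i, A i ω = (m : ℝ))
    (hAunif : ∀ v : Fin n → ℝ, (∀ i, v i = 0 ∨ v i = 1) → (∑ i, v i) = (m : ℝ) →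
      P {ω | ∀ i, A i ω = v i} = ((n.choose m : ℝ≥0∞))⁻¹)
    -- the σ-algebra generated by all outcomes and covariates, independent of the vector `A`
    (𝒢 : MeasurableSpace Ω) (h𝒢 : 𝒢 ≤ m0)
    (hindep : Indep (⨆ i, MeasurableSpace.comap (A i) inferInstance) 𝒢 P)
    -- the initially revealed holdout set
    (I₀ : Finset (Fin n))
    -- the interactively chosen ordering `π`, the revealed sets `I t`, and the filtration `ℱ`
    (π : ℕ → Ω → Fin n) (I : ℕ → Ω → Finset (Fin n)) (ℱ : ℕ → MeasurableSpace Ω)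
    (hI0 : ∀ ω, I 0 ω = I₀)
    (hIsucc : ∀ t, t + 1 ≤ n - I₀.card → ∀ ω, I (t+1) ω = insert (π (t+1) ω) (I t ω))
    (hℱ0 : ℱ 0 = 𝒢 ⊔ ⨆ i ∈ I₀, MeasurableSpace.comap (A i) inferInstance)
    (hℱsucc : ∀ t, t + 1 ≤ n - I₀.card → ℱ (t+1) = ℱ t ⊔
        MeasurableSpace.comap (fun ω => A (π (t+1) ω) ω) inferInstance)
    (hπmeas : ∀ t, t + 1 ≤ n - I₀.card → Measurable[ℱ t] (π (t+1)))
    (hπnew : ∀ t, t + 1 ≤ n - I₀.card → ∀ ω, π (t+1) ω ∉ I t ω)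
    -- the predictable treatment probabilities `μR (t+1) = (m − Σ_{i ∈ I t} A i)/(n − |I t|)`
    (μR : ℕ → Ω → ℝ)
    (hμR : ∀ t, t + 1 ≤ n - I₀.card → ∀ ω,
      μR (t+1) ω = ((m : ℝ) - ∑ i ∈ I t ω, A i ω) / ((n : ℝ) - (I t ω).card))
    -- the predictable bets, constrained on the event `μR (t+1) ∈ (0,1)` (and null otherwise)
    (w : ℕ → Ω → ℝ)
    (hwmeas : ∀ t, t + 1 ≤ n - I₀.card → Measurable[ℱ t] (w (t+1)))
    (hw : ∀ t, t + 1 ≤ n - I₀.card → ∀ᵐ ω ∂P,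
      (μR (t+1) ω ∈ Set.Ioo (0:ℝ) 1 →
        w (t+1) ω ∈ Set.Icc (-(μR (t+1) ω / (1 - μR (t+1) ω))) 1) ∧
      (μR (t+1) ω ∉ Set.Ioo (0:ℝ) 1 → w (t+1) ω = 0))
    -- the wealth process
    (M : ℕ → Ω → ℝ)
    (hM : ∀ t, t ≤ n - I₀.card → ∀ ω, M t ω = ∏ j ∈ Finset.range t,
        (1 + w (j+1) ω * (A (π (j+1) ω) ω / μR (j+1) ω - 1))) :
    -- `(M t)` is a nonnegative martingale with respect to `(ℱ t)` …
    ((∀ t, t ≤ n - I₀.card → (∀ᵐ ω ∂P, 0 ≤ M t ω) ∧ StronglyMeasurable[ℱ t] (M t)) ∧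
     (∀ ω, M 0 ω = 1) ∧
     (∀ t, t + 1 ≤ n - I₀.card → P[M (t+1) | ℱ t] =ᵐ[P] M t)) ∧
    -- … and consequently the i-bet test controls the type-I error
    (∀ α ∈ Set.Ioo (0:ℝ) 1,
      P {ω | ∃ t, t ≤ n - I₀.card ∧ 1/α ≤ M t ω} ≤ ENNReal.ofReal α) := by
  classical
  set N := n - I₀.card with hN
  let H : Finset (Fin n) → MeasurableSpace Ω :=
    fun S => 𝒢 ⊔ ⨆ i ∈ S, MeasurableSpace.comap (A i) inferInstance
  have hexch : ∀ (S : Finset (Fin n)) (i k : Fin n), i ∉ S → k ∉ S → ∀ E : Set Ω,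
      MeasurableSet[H S] E → P (E ∩ {ω | A i ω = 1}) = P (E ∩ {ω | A k ω = 1}) :=
    fun S i k hi hk E hE =>
      ibet_exch P n m A hAmeas hA01 hAsum hAunif 𝒢 h𝒢 hindep S i k hi hk E hE
  have hAπ : ∀ q : Ω → Fin n, Measurable[m0] q → Measurable[m0] (fun ω => A (q ω) ω) := by
    intro q hq
    have : (fun ω => A (q ω) ω) = fun ω => ∑ k, if q ω = k then A k ω else 0 := by
      funext ω; simp
    rw [this]
    refine Finset.measurable_sum _ fun k _ => ?_
    exact Measurable.ite (hq (measurableSet_singleton k)) (hAmeas k) measurable_const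
  have Q : ∀ t, t ≤ N → ℱ t ≤ m0 ∧ (∀ S, MeasurableSet[ℱ t] {ω | I t ω = S}) ∧
      (∀ B, MeasurableSet[ℱ t] B → ∀ S, MeasurableSet[H S] (B ∩ {ω | I t ω = S})) ∧
      Measurable[ℱ t] (fun ω => ∑ i ∈ I t ω, A i ω) ∧
      ∀ ω, (I t ω).card = I₀.card + t := by
    intro t
    induction t with
    | zero =>
      intro _
      have hℱH : ℱ 0 = H I₀ := hℱ0
      have hcase : ∀ S, {ω | I 0 ω = S} = if I₀ = S then Set.univ else ∅ := by
        intro S; split_ifs with h <;> ext ω <;> simp [hI0, h]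
      refine ⟨?_, ?_, ?_, ?_, ?_⟩
      · rw [hℱ0]
        exact sup_le h𝒢 (iSup₂_le fun i _ => (hAmeas i).comap_le)
      · intro S
        rw [hcase]; split_ifs
        · exact MeasurableSet.univ
        · exact MeasurableSpace.measurableSet_empty _
      · intro B hB S
        rw [hcase]; split_ifs with h
        · rw [Set.inter_univ, ← h, ← hℱH]; exact hB
        · rw [Set.inter_empty]; exact MeasurableSpace.measurableSet_empty _
      · simp only [hI0]
        refine Finset.measurable_sum _ fun i hi => ?_
        rw [measurable_iff_comap_le, hℱ0]
        exact le_sup_of_le_right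
          (le_iSup₂ (f := fun i (_ : i ∈ I₀) => MeasurableSpace.comap (A i) inferInstance) i hi)
      · intro ω; simp [hI0]
    | succ t ih =>
      intro ht
      obtain ⟨h1, h2, h3, h4, h5⟩ := ih (by omega)
      obtain ⟨g1, g2⟩ := ibet_step_struct A 𝒢 (ℱ t) (ℱ (t+1)) (I t) (I (t+1)) (π (t+1))
        (hIsucc t ht) (hπnew t ht) (hπmeas t ht) (hℱsucc t ht) H (fun _ => rfl) h2 h3
      refine ⟨?_, g1, g2, ?_, ?_⟩
      · rw [hℱsucc t ht]
        exact sup_le h1 (hAπ _ ((hπmeas t ht).mono h1 le_rfl)).comap_le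
      · have : (fun ω => ∑ i ∈ I (t+1) ω, A i ω)
            = fun ω => A (π (t+1) ω) ω + ∑ i ∈ I t ω, A i ω := by
          funext ω
          rw [hIsucc t ht, Finset.sum_insert (hπnew t ht ω)]
        rw [this, hℱsucc t ht]
        refine Measurable.add ?_ (h4.mono le_sup_left le_rfl)
        exact (comap_measurable (fun ω => A (π (t+1) ω) ω)).mono le_sup_right le_rfl
      · intro ω
        rw [hIsucc t ht, Finset.card_insert_of_notMem (hπnew t ht ω), h5]; omega
  have hle : ∀ t, t ≤ N → ℱ t ≤ m0 := fun t ht => (Q t ht).1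
  have hmono1 : ∀ t, t + 1 ≤ N → ℱ t ≤ ℱ (t+1) := fun t ht => by
    rw [hℱsucc t ht]; exact le_sup_left
  have hμb : ∀ t, t + 1 ≤ N → ∀ ω, 0 ≤ μR (t+1) ω ∧ μR (t+1) ω ≤ 1 ∧
      (μR (t+1) ω ∈ Set.Ioo (0:ℝ) 1 → 1 ≤ n * μR (t+1) ω ∧ 1 ≤ n * (1 - μR (t+1) ω)) :=
    fun t ht ω => ibet_mu n m (fun i => A i ω) (fun i => hA01 i ω) (hAsum ω) (I t ω) _
      (hπnew t ht ω) _ (hμR t ht ω)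
  have hμm : ∀ t, t + 1 ≤ N → Measurable[ℱ t] (μR (t+1)) := by
    intro t ht
    obtain ⟨h1, h2, h3, h4, h5⟩ := Q t (by omega)
    have : μR (t+1) = fun ω => ((m : ℝ) - ∑ i ∈ I t ω, A i ω) / ((n : ℝ) - (I₀.card + t : ℕ)) := by
      funext ω; rw [hμR t ht, h5]
    rw [this]
    exact (measurable_const.sub h4).div_const _
  have hAm : ∀ t, t + 1 ≤ N → Measurable[ℱ (t+1)] (fun ω => A (π (t+1) ω) ω) := by
    intro t ht
    rw [hℱsucc t ht]
    exact (comap_measurable (fun ω => A (π (t+1) ω) ω)).mono le_sup_right le_rfl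
  have hMsucc : ∀ t, t + 1 ≤ N → ∀ ω, M (t+1) ω
      = M t ω * (1 + w (t+1) ω * (A (π (t+1) ω) ω / μR (t+1) ω - 1)) := by
    intro t ht ω
    rw [hM (t+1) ht, hM t (by omega), Finset.prod_range_succ]
  have hM0 : ∀ ω, M 0 ω = 1 := fun ω => by rw [hM 0 (by omega)]; simp
  have hfac : ∀ t, t + 1 ≤ N → ∀ᵐ ω ∂P,
      0 ≤ 1 + w (t+1) ω * (A (π (t+1) ω) ω / μR (t+1) ω - 1) ∧
      1 + w (t+1) ω * (A (π (t+1) ω) ω / μR (t+1) ω - 1)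
        = 1 + w (t+1) ω / μR (t+1) ω * (A (π (t+1) ω) ω - μR (t+1) ω) ∧
      |w (t+1) ω / μR (t+1) ω| ≤ n := by
    intro t ht
    filter_upwards [hw t ht] with ω hω
    exact ibet_factor n _ _ _ (Nat.cast_nonneg n) (hA01 _ ω) (hμb t ht ω).2.2 hω.1 hω.2
  have hAμ : ∀ t, t + 1 ≤ N → ∀ ω, |A (π (t+1) ω) ω - μR (t+1) ω| ≤ 1 := by
    intro t ht ω
    obtain ⟨h0, h1, _⟩ := hμb t ht ω
    rw [abs_le]
    rcases hA01 (π (t+1) ω) ω with h | h <;> rw [h] <;> constructor <;> linarith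
  have hMm : ∀ t, t ≤ N → Measurable[ℱ t] (M t) := by
    intro t
    induction t with
    | zero =>
      intro _
      have : M 0 = fun _ => 1 := funext hM0
      rw [this]; exact measurable_const
    | succ t ih =>
      intro ht
      have : M (t+1) = fun ω =>
        M t ω * (1 + w (t+1) ω * (A (π (t+1) ω) ω / μR (t+1) ω - 1)) := funext (hMsucc t ht)
      rw [this]
      have a1 := (ih (by omega)).mono (hmono1 t ht) le_rfl
      have a2 := (hwmeas t ht).mono (hmono1 t ht) le_rfl
      have a3 := (hμm t ht).mono (hmono1 t ht) le_rfl
      exact a1.mul (measurable_const.add (a2.mul (((hAm t ht).div a3).sub measurable_const)))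
  have hMnn : ∀ t, t ≤ N → ∀ᵐ ω ∂P, 0 ≤ M t ω := by
    intro t
    induction t with
    | zero => intro _; exact ae_of_all _ fun ω => by rw [hM0]; exact zero_le_one
    | succ t ih =>
      intro ht
      filter_upwards [ih (by omega), hfac t ht] with ω h1 h2
      rw [hMsucc t ht]
      exact mul_nonneg h1 h2.1
  have hMb : ∀ t, t ≤ N → ∀ᵐ ω ∂P, |M t ω| ≤ (1 + (n:ℝ)) ^ t := by
    intro t
    induction t with
    | zero => intro _; exact ae_of_all _ fun ω => by rw [hM0]; simp
    | succ t ih =>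
      intro ht
      filter_upwards [ih (by omega), hfac t ht] with ω h1 h2
      rw [hMsucc t ht, h2.2.1, abs_mul, pow_succ]
      refine mul_le_mul h1 ?_ (abs_nonneg _) (by positivity)
      refine (abs_add_le _ _).trans ?_
      rw [abs_one, abs_mul]
      have := mul_le_mul h2.2.2 (hAμ t ht ω) (abs_nonneg _) (Nat.cast_nonneg n)
      linarith
  have hMi : ∀ t, t ≤ N → Integrable (M t) P := fun t ht =>
    Integrable.of_bound ((hMm t ht).mono (hle t ht) le_rfl).aestronglyMeasurable _
      (by simpa [Real.norm_eq_abs] using hMb t ht)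
  have hmart : ∀ t, t + 1 ≤ N → P[M (t+1) | ℱ t] =ᵐ[P] M t := by
    intro t ht
    have ht' : t ≤ N := by omega
    obtain ⟨h1, h2, h3, h4, h5⟩ := Q t ht'
    let f : Ω → ℝ := fun ω => A (π (t+1) ω) ω
    have hfm : Measurable[m0] f := hAπ _ ((hπmeas t ht).mono h1 le_rfl)
    have hfi : Integrable f P := Integrable.of_bound hfm.aestronglyMeasurable 1
      (ae_of_all _ fun ω => by rcases hA01 (π (t+1) ω) ω with h | h <;> simp [f, h])
    have hgi : Integrable (μR (t+1)) P :=
      Integrable.of_bound ((hμm t ht).mono h1 le_rfl).aestronglyMeasurable 1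
      (ae_of_all _ fun ω => by
        obtain ⟨a, b, _⟩ := hμb t ht ω
        rw [Real.norm_eq_abs, abs_of_nonneg a]; exact b)
    have hce : μR (t+1) =ᵐ[P] P[f | ℱ t] := by
      refine ae_eq_condExp_of_forall_setIntegral_eq h1 hfi (fun s _ _ => hgi.integrableOn) ?_
        (hμm t ht).stronglyMeasurable.aestronglyMeasurable
      intro E hE _
      exact ibet_cond P n m A hAmeas hA01 hAsum H hexch (ℱ t) h1 (I t) (π (t+1)) (hπnew t ht)
        (hπmeas t ht) h2 h3 f (μR (t+1)) (fun _ => rfl) (hμR t ht) hfi hgi E hE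
    let K : Ω → ℝ := fun ω => M t ω * (w (t+1) ω / μR (t+1) ω)
    have hKm : StronglyMeasurable[ℱ t] K :=
      ((hMm t ht').mul ((hwmeas t ht).div (hμm t ht))).stronglyMeasurable
    have hKb : ∀ᵐ ω ∂P, ‖K ω‖ ≤ (1 + (n:ℝ)) ^ t * n := by
      filter_upwards [hMb t ht', hfac t ht] with ω a b
      rw [Real.norm_eq_abs, abs_mul]
      exact mul_le_mul a b.2.2 (abs_nonneg _) (by positivity)
    have hdi : Integrable (f - μR (t+1)) P := hfi.sub hgi
    have hdec : M (t+1) =ᵐ[P] M t + K * (f - μR (t+1)) := by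
      filter_upwards [hfac t ht] with ω b
      rw [hMsucc t ht, b.2.1]
      simp only [Pi.add_apply, Pi.mul_apply, Pi.sub_apply, K, f]
      ring
    have hKi : Integrable (K * (f - μR (t+1))) P :=
      hdi.bdd_mul (hKm.mono h1).aestronglyMeasurable hKb
    have c1 := condExp_congr_ae (m := ℱ t) hdec
    have c2 := condExp_add (hMi t ht') hKi (ℱ t)
    have c3 := condExp_stronglyMeasurable_mul_of_bound h1 hKm hdi _ hKb
    have c4 := condExp_sub hfi hgi (ℱ t)
    have c5 := condExp_of_stronglyMeasurable h1 (hμm t ht).stronglyMeasurable hgi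
    have c6 := condExp_of_stronglyMeasurable h1 (hMm t ht').stronglyMeasurable (hMi t ht')
    filter_upwards [c1, c2, c3, c4, hce] with ω d1 d2 d3 d4 d5
    rw [d1, d2, Pi.add_apply, d3, Pi.mul_apply, d4, Pi.sub_apply, c5, c6, ← d5]
    ring
  refine ⟨⟨fun t ht => ⟨hMnn t ht, (hMm t ht).stronglyMeasurable⟩, hM0, hmart⟩, ?_⟩
  rintro α ⟨hα0, hα1⟩
  let 𝒻 : Filtration ℕ m0 :=
    { seq := fun t => ℱ (min t N)
      mono' := by
        refine monotone_nat_of_le_succ fun t => ?_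
        rcases Nat.lt_or_ge t N with h | h
        · rw [min_eq_left h.le, min_eq_left (Nat.succ_le_of_lt h)]
          exact hmono1 t h
        · rw [min_eq_right h, min_eq_right (by omega)]
      le' := fun t => hle _ (min_le_right _ _) }
  let X : ℕ → Ω → ℝ := fun t => M (min t N)
  have hX : Martingale X 𝒻 P := by
    refine martingale_nat (fun t => (hMm _ (min_le_right _ _)).stronglyMeasurable)
      (fun t => hMi _ (min_le_right _ _)) (fun t => ?_)
    change M (min t N) =ᵐ[P] P[M (min (t+1) N) | ℱ (min t N)]
    rcases Nat.lt_or_ge t N with h | h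
    · rw [min_eq_left h.le, min_eq_left (Nat.succ_le_of_lt h)]
      exact (hmart t h).symm
    · rw [min_eq_right h, min_eq_right (by omega)]
      rw [condExp_of_stronglyMeasurable (hle N le_rfl) (hMm N le_rfl).stronglyMeasurable
        (hMi N le_rfl)]
  have hXp := hX.submartingale.pos
  have hXi : ∫ ω, M N ω ∂P = 1 := by
    have := hX.setIntegral_eq (Nat.zero_le N) (s := Set.univ) MeasurableSet.univ
    simp only [Measure.restrict_univ, X, Nat.zero_min, min_self, hM0] at this
    rw [← this]; simp
  have hmax := maximal_ineq hXp (fun t ω => posPart_nonneg _) (ε := Real.toNNReal (1/α)) N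
  set B := {ω | ((Real.toNNReal (1/α) : NNReal) : ℝ) ≤
    (Finset.range (N + 1)).sup' Finset.nonempty_range_add_one fun k => X⁺ k ω} with hB
  have hsub : {ω | ∃ t, t ≤ N ∧ 1/α ≤ M t ω} ⊆ B := by
    rintro ω ⟨t, ht, h⟩
    rw [hB, Set.mem_ofPred_eq, Real.coe_toNNReal _ (by positivity)]
    refine h.trans (le_trans ?_ (Finset.le_sup' (fun k => X⁺ k ω)
      (Finset.mem_range.2 (Nat.lt_succ_of_le ht))))
    have : M t ω = X t ω := by simp only [X, min_eq_left ht]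
    rw [this]
    exact le_posPart (X t ω)
  have hint : ∫ ω in B, X⁺ N ω ∂P ≤ 1 := by
    rw [← hXi]
    have e : ∫ ω, M N ω ∂P = ∫ ω, X⁺ N ω ∂P := by
      refine integral_congr_ae ?_
      filter_upwards [hMnn N le_rfl] with ω h
      have : X⁺ N ω = (X N ω)⁺ := rfl
      rw [this]
      simp only [X, min_self]
      exact (posPart_eq_self.2 h).symm
    rw [e]
    exact setIntegral_le_integral (hXp.integrable N) (ae_of_all _ fun ω => posPart_nonneg _)
  have h1 : ENNReal.ofReal (1/α) * P B ≤ 1 :=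
    hmax.trans ((ENNReal.ofReal_le_ofReal hint).trans (by simp))
  refine (measure_mono hsub).trans ?_
  calc P B = ENNReal.ofReal α * (ENNReal.ofReal (1/α) * P B) := by
        rw [← mul_assoc, ← ENNReal.ofReal_mul hα0.le, mul_one_div_cancel hα0.ne']
        simp
    _ ≤ ENNReal.ofReal α * 1 := by gcongr
    _ = _ := mul_one _
end
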